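/- arXiv:2005.12098 — 2 statements merged into one kernel-verified Lean document; each statement's English description precedes it below -/
import Mathlib

section
/- Let h¹ and h² both satisfy condition (H), with lower Lipschitz-in-x constant c_{h¹} for h¹ and upper Lipschitz-in-x constant C_{h²} for h². Let Y¹, Y² be processes on the same probability space, each with càdlàg paths, integrable values and uniformly integrable on compact time intervals, let lⁱ, uⁱ be càdlàg with lⁱ ≤ uⁱ and lⁱ_0 ≤ E[hⁱ(0, Yⁱ_0)] ≤ uⁱ_0, and let (Xⁱ, kⁱ) be the solution of the Skorokhod problem with mean minimality condition and two constraints associated with (hⁱ, Yⁱ, lⁱ, uⁱ), i = 1, 2. Put C = max( (c_{h¹})⁻¹, 2·C_{h²}·(c_{h¹})⁻¹ + 1 ). Then for every q ≥ 0: sup_{t≤q} |k¹_t − k²_t| ≤ C·( sup_{(t,x)∈[0,q]×ℝ} |h¹(t,x) − h²(t,x)| + sup_{t≤q} E|Y¹_t − Y²_t| + sup_{t≤q} max(|l¹_t − l²_t|, |u¹_t − u²_t|) ), and E[ sup_{t≤q} |X¹_t − X²_t| ] ≤ (C+1)·E[ sup_{t≤q} |Y¹_t − Y²_t| ] + C·(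 sup_{(t,x)∈[0,q]×ℝ} |h¹(t,x) − h²(t,x)| + sup_{t≤q} max(|l¹_t − l²_t|, |u¹_t − u²_t|) ). -/
open MeasureTheory Filter Set Function Topology

noncomputable section

/-- A function with values in a topological space is càdlàg on `[0,∞)`:
right-continuous at every `t ≥ 0` and admitting a left limit at every `t > 0`. -/
def CadlagOn {E : Type*} [TopologicalSpace E] (f : ℝ → E) : Prop :=
  (∀ t : ℝ, 0 ≤ t → ContinuousWithinAt f (Set.Ici t) t) ∧
  ∀ t : ℝ, 0 < t → ∃ L : E, Filter.Tendsto f (nhdsWithin t (Set.Iio t)) (nhds L)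

/-- Condition (H) on `h : [0,∞) × ℝ → ℝ` with constants `Mh, Lh, ch, Ch`. -/
structure CondH (h : ℝ → ℝ → ℝ) (Mh Lh ch Ch : ℝ) : Prop where
  meas : Measurable (Function.uncurry h)
  Mh_pos : 0 < Mh
  Lh_pos : 0 < Lh
  ch_pos : 0 < ch
  Ch_pos : 0 < Ch
  growth : ∀ t x : ℝ, 0 ≤ t → |h t x| ≤ Mh * (1 + |x|)
  strict_mono : ∀ t : ℝ, 0 ≤ t → StrictMono (h t)
  lip_time : ∀ s t x : ℝ, 0 ≤ s → 0 ≤ t → |h t x - h s x| ≤ Lh * |t - s|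
  lip_lower : ∀ t x y : ℝ, 0 ≤ t → ch * |x - y| ≤ |h t x - h t y|
  lip_upper : ∀ t x y : ℝ, 0 ≤ t → |h t x - h t y| ≤ Ch * |x - y|

/-- A process with càdlàg paths, integrable values, and values uniformly integrable
on every compact time interval. -/
structure NiceProcess {Ω : Type*} [MeasurableSpace Ω] (μ : Measure Ω) (Y : ℝ → Ω → ℝ) : Prop where
  cadlag : ∀ ω, CadlagOn fun t => Y t ω
  integrable : ∀ t : ℝ, 0 ≤ t → Integrable (Y t) μ
  unifInt : ∀ q : ℝ, 0 ≤ q → UniformIntegrable (fun t : Set.Icc (0:ℝ) q => Y t.1) 1 μ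

/-- Solution of the Skorokhod problem with mean minimality condition and two constraints
associated with `(h, Y, l, u)`. -/
def MeanSP {Ω : Type*} [MeasurableSpace Ω] (μ : Measure Ω) (h : ℝ → ℝ → ℝ)
    (Y : ℝ → Ω → ℝ) (l u : ℝ → ℝ) (X : ℝ → Ω → ℝ) (k : ℝ → ℝ) : Prop :=
  (∀ ω, CadlagOn fun t => X t ω) ∧ CadlagOn k ∧ k 0 = 0 ∧
  (∀ t : ℝ, 0 ≤ t → ∀ ω, X t ω = Y t ω + k t) ∧
  (∀ t : ℝ, 0 ≤ t → (∫ ω, h t (X t ω) ∂μ) ∈ Set.Icc (l t) (u t)) ∧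
  (∀ t q : ℝ, 0 ≤ t → t ≤ q →
    ((∀ s : ℝ, t < s → s ≤ q → (∫ ω, h s (X s ω) ∂μ) < u s) → 0 ≤ k q - k t) ∧
    ((∀ s : ℝ, t < s → s ≤ q → l s < ∫ ω, h s (X s ω) ∂μ) → k q - k t ≤ 0)) ∧
  ∀ t : ℝ, 0 < t →
    ((∫ ω, h t (X t ω) ∂μ) < u t → 0 ≤ k t - Function.leftLim k t) ∧
    (l t < ∫ ω, h t (X t ω) ∂μ → k t - Function.leftLim k t ≤ 0)

/-- Solution of the deterministic Skorokhod problem with two time-dependent barriers. -/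
def DetSP (y lb ub x k : ℝ → ℝ) : Prop :=
  CadlagOn x ∧ CadlagOn k ∧ k 0 = 0 ∧
  (∀ t : ℝ, 0 ≤ t → x t = y t + k t ∧ x t ∈ Set.Icc (lb t) (ub t)) ∧
  (∀ t q : ℝ, 0 ≤ t → t ≤ q →
    ((∀ s : ℝ, t < s → s ≤ q → x s < ub s) → 0 ≤ k q - k t) ∧
    ((∀ s : ℝ, t < s → s ≤ q → lb s < x s) → k q - k t ≤ 0)) ∧
  ∀ t : ℝ, 0 < t →
    (x t < ub t → 0 ≤ k t - Function.leftLim k t) ∧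
    (lb t < x t → k t - Function.leftLim k t ≤ 0)

/-- Solution of the Skorokhod problem with mean minimality condition and a single
lower barrier `l`.  The minimality condition `∫ (E[h(s,X_s)] - l_s) dk_s = 0` is expressed
through any measure `ν` that agrees with the Lebesgue–Stieltjes measure of `k` on `[0,∞)`. -/
def MeanSPLower {Ω : Type*} [MeasurableSpace Ω] (μ : Measure Ω) (h : ℝ → ℝ → ℝ)
    (Y : ℝ → Ω → ℝ) (l : ℝ → ℝ) (X : ℝ → Ω → ℝ) (k : ℝ → ℝ) : Prop :=
  (∀ ω, CadlagOn fun t => X t ω) ∧ CadlagOn k ∧ k 0 = 0 ∧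
  (∀ t : ℝ, 0 ≤ t → ∀ ω, X t ω = Y t ω + k t) ∧
  (∀ t : ℝ, 0 ≤ t → l t ≤ ∫ ω, h t (X t ω) ∂μ) ∧
  MonotoneOn k (Set.Ici 0) ∧
  ∀ ν : Measure ℝ,
    (∀ a b : ℝ, 0 ≤ a → a ≤ b → ν (Set.Ioc a b) = ENNReal.ofReal (k b - k a)) →
    ν {0} = 0 →
    ∀ t : ℝ, 0 ≤ t → (∫ s in Set.Icc 0 t, ((∫ ω, h s (X s ω) ∂μ) - l s) ∂ν) = 0

/-- Solution of the Skorokhod problem with mean minimality condition and a single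
upper barrier `u`.  The minimality condition `∫ (u_s - E[h(s,X_s)]) d(-k)_s = 0` is expressed
through any measure `ν` that agrees with the Lebesgue–Stieltjes measure of `-k` on `[0,∞)`. -/
def MeanSPUpper {Ω : Type*} [MeasurableSpace Ω] (μ : Measure Ω) (h : ℝ → ℝ → ℝ)
    (Y : ℝ → Ω → ℝ) (u : ℝ → ℝ) (X : ℝ → Ω → ℝ) (k : ℝ → ℝ) : Prop :=
  (∀ ω, CadlagOn fun t => X t ω) ∧ CadlagOn k ∧ k 0 = 0 ∧
  (∀ t : ℝ, 0 ≤ t → ∀ ω, X t ω = Y t ω + k t) ∧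
  (∀ t : ℝ, 0 ≤ t → (∫ ω, h t (X t ω) ∂μ) ≤ u t) ∧
  AntitoneOn k (Set.Ici 0) ∧
  ∀ ν : Measure ℝ,
    (∀ a b : ℝ, 0 ≤ a → a ≤ b → ν (Set.Ioc a b) = ENNReal.ofReal (k a - k b)) →
    ν {0} = 0 →
    ∀ t : ℝ, 0 ≤ t → (∫ s in Set.Icc 0 t, (u s - ∫ ω, h s (X s ω) ∂μ) ∂ν) = 0

/-- `OscN x η q` is the number of `η`-oscillations of `x` on `[0,q]`: the largest `m`
for which there are `0 ≤ t₁ ≤ t₂ ≤ ⋯ ≤ t_{2m} ≤ q` with `|x(t_{2i}) - x(t_{2i-1})| > η`. -/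
def OscN (x : ℝ → ℝ) (η q : ℝ) : ℕ :=
  sSup {m : ℕ | ∃ a b : Fin m → ℝ,
    (∀ i, 0 ≤ a i ∧ a i ≤ b i ∧ b i ≤ q) ∧
    (∀ i j, i < j → b i ≤ a j) ∧
    ∀ i, η < |x (b i) - x (a i)|}

/-- The left limit at `t` of a càdlàg function on `[0,∞)`, with the convention
`x(0-) = x(0)`. -/
def leftLimAt {E : Type*} [TopologicalSpace E] (x : ℝ → E) (t : ℝ) : E :=
  if t = 0 then x 0 else Function.leftLim x t

/-- Convergence `xₙ → x` in the Skorokhod `J₁` topology on `D([0,∞), E)`, expressed via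
the sequence characterization used in the paper. -/
def DConvOn {E : Type*} [TopologicalSpace E] (xs : ℕ → ℝ → E) (x : ℝ → E) : Prop :=
  ∀ t : ℝ, 0 ≤ t → ∃ tn : ℕ → ℝ,
    (∀ n, 0 ≤ tn n) ∧ Filter.Tendsto tn Filter.atTop (nhds t) ∧
    ∀ t' t'' : ℕ → ℝ, (∀ n, 0 ≤ t' n) → (∀ n, 0 ≤ t'' n) →
      Filter.Tendsto t' Filter.atTop (nhds t) → Filter.Tendsto t'' Filter.atTop (nhds t) →
      (∀ n, t' n < tn n ∧ tn n ≤ t'' n) →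
      Filter.Tendsto (fun n => xs n (t' n)) Filter.atTop (nhds (leftLimAt x t)) ∧
      Filter.Tendsto (fun n => xs n (t'' n)) Filter.atTop (nhds (x t))

/-!
Let `c` be the strong monotonicity constant of `h₁` in space and `L` the Lipschitz constant of `h₂`.
Comparing both functions at the common shift `k₂` shows that `E[h₁(t, X¹)] - E[h₂(t, X²)]` is at
least `c (k₁ - k₂) - (A + L B)` as long as `k₂ ≤ k₁`, where `A` bounds `|h₁ - h₂|` and `B` bounds
`E|Y¹ - Y²|`. Hence, once `k₁ - k₂` exceeds `M = c⁻¹ (A + L B + D)`, the means are further apart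
than the distance `D` between the barriers: the first mean is off its lower barrier and the second
off its upper barrier. Minimality then lets `k₁` only decrease and `k₂` only increase, continuously
or by jumps, so `k₁ - k₂` never climbs above `M`.
-/

open scoped NNReal

section LevelCrossing

variable {α β : Type*} [ConditionallyCompleteLinearOrder α] [TopologicalSpace α] [OrderTopology α]
  [LinearOrder β]

-- `hleft` forbids jumps into `{M < f}`: a point above the level has points above it just before.
theorem le_of_nonincreasing_above_level {f : α → β} {a b : α} {M : β} (hab : a ≤ b) (ha : f a ≤ M)
    (hleft : ∀ t ∈ Ioc a b, M < f t → ∀ᶠ s in 𝓝[<] t, M < f s)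
    (hdecr : ∀ s ∈ Icc a b, (∀ r ∈ Ioc s b, M < f r) → f b ≤ f s) : f b ≤ M := by
  have haS : a ∈ {s ∈ Icc a b | f s ≤ M} := ⟨left_mem_Icc.2 hab, ha⟩
  obtain ⟨σ, hσ⟩ : ∃ σ, IsLUB {s ∈ Icc a b | f s ≤ M} σ :=
    ⟨_, isLUB_csSup ⟨a, haS⟩ ⟨b, fun s hs => hs.1.2⟩⟩
  have hσ_mem : σ ∈ Icc a b := ⟨hσ.1 haS, hσ.2 fun s hs => hs.1.2⟩
  have hσ_le : f σ ≤ M := by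
    by_contra! hlt
    have hσa : a < σ := hσ_mem.1.lt_of_ne (by rintro rfl; exact ha.not_gt hlt)
    have hnear : ∀ᶠ s in 𝓝[≤] σ, M < f s := by
      rw [← Iio_insert, nhdsWithin_insert, eventually_sup]
      exact ⟨hlt, hleft σ ⟨hσa, hσ_mem.2⟩ hlt⟩
    obtain ⟨s, hs, hMs⟩ := ((hσ.frequently_mem ⟨a, haS⟩).and_eventually hnear).exists
    exact hs.2.not_gt hMs
  refine (hdecr σ hσ_mem fun r hr => ?_).trans hσ_le
  by_contra! hle
  exact (hσ.1 ⟨⟨hσ_mem.1.trans hr.1.le, hr.2⟩, hle⟩).not_gt hr.1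

end LevelCrossing

section Cadlag

theorem CadlagOn.tendsto_leftLim {E : Type*} [TopologicalSpace E] {f : ℝ → E} (hf : CadlagOn f)
    {t : ℝ} (ht : 0 < t) : Tendsto f (𝓝[<] t) (𝓝 (leftLim f t)) :=
  tendsto_leftLim_of_tendsto (hf.2 t ht)

theorem CadlagOn.sub {E : Type*} [TopologicalSpace E] [Sub E] [ContinuousSub E] {f g : ℝ → E}
    (hf : CadlagOn f) (hg : CadlagOn g) : CadlagOn fun t => f t - g t :=
  ⟨fun t ht => (hf.1 t ht).sub (hg.1 t ht),
    fun _ ht => ⟨_, (hf.tendsto_leftLim ht).sub (hg.tendsto_leftLim ht)⟩⟩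

theorem CadlagOn.isBounded_image_Icc {E : Type*} [PseudoMetricSpace E] {f : ℝ → E}
    (hf : CadlagOn f) (q : ℝ) : Bornology.IsBounded (f '' Icc 0 q) := by
  refine isCompact_Icc.induction_on (p := fun s => Bornology.IsBounded (f '' s))
    (by simp only [image_empty, Bornology.isBounded_empty])
    (fun s t hst ht => ht.subset (image_mono hst))
    (fun s t hs ht => image_union f s t ▸ hs.union ht) fun t ht => ?_
  obtain ⟨V, hV, hVb⟩ := Metric.exists_isBounded_image_of_tendsto (hf.1 t ht.1).tendsto
  rcases ht.1.eq_or_lt with rfl | ht0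
  · exact ⟨V, nhdsWithin_mono 0 Icc_subset_Ici_self hV, hVb⟩
  · obtain ⟨U, hU, hUb⟩ := Metric.exists_isBounded_image_of_tendsto (hf.tendsto_leftLim ht0)
    refine ⟨U ∪ V, mem_nhdsWithin_of_mem_nhds ?_, image_union f U V ▸ hUb.union hVb⟩
    rw [← nhdsLT_sup_nhdsGE]
    exact union_mem_sup hU hV

end Cadlag

section Means

variable {Ω : Type*} [MeasurableSpace Ω] {μ : Measure Ω}

theorem integrable_comp_of_lipschitzWith [IsFiniteMeasure μ] {E F : Type*} [NormedAddCommGroup E]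
    [NormedAddCommGroup F] {g : E → F} {L : ℝ≥0} (hg : LipschitzWith L g) {Z : Ω → E}
    (hZ : Integrable Z μ) : Integrable (fun ω => g (Z ω)) μ := by
  refine ((integrable_const ‖g 0‖).add (hZ.norm.const_mul L)).mono'
    (hg.continuous.comp_aestronglyMeasurable hZ.1) (.of_forall fun ω => ?_)
  calc ‖g (Z ω)‖ ≤ ‖g 0‖ + ‖g (Z ω) - g 0‖ := norm_le_norm_add_norm_sub' _ _
    _ ≤ ‖g 0‖ + L * ‖Z ω - 0‖ := by gcongr; exact hg.norm_sub_le _ _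
    _ = ‖g 0‖ + L * ‖Z ω‖ := by rw [sub_zero]

theorem norm_integral_comp_sub_integral_comp_le [IsProbabilityMeasure μ] {E F : Type*}
    [NormedAddCommGroup E] [NormedAddCommGroup F] [NormedSpace ℝ F] {g₁ g₂ : E → F} {A : ℝ}
    {L : ℝ≥0} (hA : ∀ x, ‖g₁ x - g₂ x‖ ≤ A) (hg₂ : LipschitzWith L g₂) {Z₁ Z₂ : Ω → E}
    (hg₁Z₁ : Integrable (fun ω => g₁ (Z₁ ω)) μ) (hZ₁ : Integrable Z₁ μ) (hZ₂ : Integrable Z₂ μ) :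
    ‖∫ ω, g₁ (Z₁ ω) ∂μ - ∫ ω, g₂ (Z₂ ω) ∂μ‖ ≤ A + L * ∫ ω, ‖Z₁ ω - Z₂ ω‖ ∂μ := by
  have hdist : Integrable (fun ω => L * ‖Z₁ ω - Z₂ ω‖) μ := (hZ₁.sub hZ₂).norm.const_mul _
  rw [← integral_sub hg₁Z₁ (integrable_comp_of_lipschitzWith hg₂ hZ₂)]
  calc ‖∫ ω, (g₁ (Z₁ ω) - g₂ (Z₂ ω)) ∂μ‖
      ≤ ∫ ω, (A + L * ‖Z₁ ω - Z₂ ω‖) ∂μ := by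
        refine norm_integral_le_of_norm_le ((integrable_const A).add hdist) (.of_forall fun ω => ?_)
        exact (norm_sub_le_norm_sub_add_norm_sub _ (g₂ (Z₁ ω)) _).trans
          (add_le_add (hA _) (hg₂.norm_sub_le _ _))
    _ = A + L * ∫ ω, ‖Z₁ ω - Z₂ ω‖ ∂μ := by
        rw [integral_add (integrable_const A) hdist, integral_const_mul]
        simp only [integral_const, probReal_univ, one_smul]

theorem monotone_integral_comp_add_sub_mul [IsProbabilityMeasure μ] {g : ℝ → ℝ} {c : ℝ}
    (hg : Monotone fun x => g x - c * x) {Z : Ω → ℝ}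
    (hint : ∀ a, Integrable (fun ω => g (Z ω + a)) μ) :
    Monotone fun a => ∫ ω, g (Z ω + a) ∂μ - c * a := by
  intro a b hab
  have hpt : ∀ ω, g (Z ω + a) + c * (b - a) ≤ g (Z ω + b) := fun ω => by
    linarith [hg (show Z ω + a ≤ Z ω + b by gcongr)]
  have hmean := integral_mono ((hint a).add (integrable_const (c * (b - a)))) (hint b) hpt
  simp only [Pi.add_apply, integral_add (hint a) (integrable_const _), integral_const,
    probReal_univ, one_smul] at hmean
  linarith

theorem integrable_comp_of_monotone_sub_mul [IsFiniteMeasure μ] {g₁ g₂ : ℝ → ℝ} {c A : ℝ}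
    {L : ℝ≥0} (hc : 0 ≤ c) (hg₁ : Monotone fun x => g₁ x - c * x) (hg₂ : LipschitzWith L g₂)
    (hA : ∀ x, |g₁ x - g₂ x| ≤ A) {Z : Ω → ℝ} (hZ : Integrable Z μ) :
    Integrable (fun ω => g₁ (Z ω)) μ := by
  have hmono : Monotone g₁ := by
    simpa only [id_eq, sub_add_cancel] using hg₁.add (monotone_id.const_mul hc)
  have hg₂Z : Integrable (fun ω => g₂ (Z ω)) μ := integrable_comp_of_lipschitzWith hg₂ hZ
  have hdiff : Integrable (fun ω => g₁ (Z ω) - g₂ (Z ω)) μ :=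
    .of_bound ((hmono.measurable.comp_aemeasurable hZ.aemeasurable).aestronglyMeasurable.sub hg₂Z.1)
      A (.of_forall fun _ => hA _)
  simpa only [Pi.add_def, sub_add_cancel] using hdiff.add hg₂Z

theorem mul_sub_le_integral_comp_add_sub [IsProbabilityMeasure μ] {g₁ g₂ : ℝ → ℝ} {c A : ℝ}
    {L : ℝ≥0} (hc : 0 ≤ c) (hg₁ : Monotone fun x => g₁ x - c * x) (hg₂ : LipschitzWith L g₂)
    (hA : ∀ x, |g₁ x - g₂ x| ≤ A) {Z₁ Z₂ : Ω → ℝ} (hZ₁ : Integrable Z₁ μ)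
    (hZ₂ : Integrable Z₂ μ) (a b : ℝ) :
    (b ≤ a → c * (a - b) - (A + L * ∫ ω, |Z₁ ω - Z₂ ω| ∂μ) ≤
      ∫ ω, g₁ (Z₁ ω + a) ∂μ - ∫ ω, g₂ (Z₂ ω + b) ∂μ) ∧
    (a ≤ b → c * (b - a) - (A + L * ∫ ω, |Z₁ ω - Z₂ ω| ∂μ) ≤
      ∫ ω, g₂ (Z₂ ω + b) ∂μ - ∫ ω, g₁ (Z₁ ω + a) ∂μ) := by
  have hint r : Integrable (fun ω => g₁ (Z₁ ω + r)) μ :=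
    integrable_comp_of_monotone_sub_mul hc hg₁ hg₂ hA (hZ₁.add (integrable_const r))
  have hmono := monotone_integral_comp_add_sub_mul hg₁ hint
  have hclose := norm_integral_comp_sub_integral_comp_le hA hg₂ (hint b)
    (hZ₁.add (integrable_const b)) (hZ₂.add (integrable_const b))
  simp only [Pi.add_apply, add_sub_add_right_eq_sub, Real.norm_eq_abs] at hclose
  constructor <;> intro hab
  · linarith [hmono hab, neg_le_of_abs_le hclose]
  · linarith [hmono hab, le_of_abs_le hclose]

theorem integral_le_toReal_lintegral_ofReal {f g : Ω → ℝ} (hf : AEStronglyMeasurable f μ)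
    (hf0 : 0 ≤ᵐ[μ] f) (hfg : f ≤ᵐ[μ] g) (hg : ∫⁻ ω, ENNReal.ofReal (g ω) ∂μ ≠ ⊤) :
    ∫ ω, f ω ∂μ ≤ (∫⁻ ω, ENNReal.ofReal (g ω) ∂μ).toReal := by
  rw [integral_eq_lintegral_of_nonneg_ae hf0 hf]
  exact ENNReal.toReal_mono hg (lintegral_mono_ae (hfg.mono fun _ => ENNReal.ofReal_le_ofReal))

end Means

/-- The uniform distance `sup_{t ≤ q} |Z₁ t ω - Z₂ t ω|` of the paths of two real processes along
`ω`. It is `0` when the difference of the paths is unbounded on `[0, q]`. -/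
def pathSupDist {Ω : Type*} (Z₁ Z₂ : ℝ → Ω → ℝ) (q : ℝ) (ω : Ω) : ℝ :=
  sSup ((fun t => |Z₁ t ω - Z₂ t ω|) '' Icc 0 q)

section Comparison

variable {Ω : Type*} [MeasurableSpace Ω] {μ : Measure Ω} {h₁ h₂ : ℝ → ℝ → ℝ}
  {Y₁ Y₂ X₁ X₂ : ℝ → Ω → ℝ} {l₁ u₁ l₂ u₂ k₁ k₂ : ℝ → ℝ}

theorem MeanSP.integral_comp_eq (hsol : MeanSP μ h₁ Y₁ l₁ u₁ X₁ k₁) {t : ℝ} (ht : 0 ≤ t) :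
    ∫ ω, h₁ t (X₁ t ω) ∂μ = ∫ ω, h₁ t (Y₁ t ω + k₁ t) ∂μ := by
  obtain ⟨-, -, -, hX, -⟩ := hsol
  simp only [hX t ht]

theorem MeanSP.k_sub_le_of_lt_integral (hsol₁ : MeanSP μ h₁ Y₁ l₁ u₁ X₁ k₁)
    (hsol₂ : MeanSP μ h₂ Y₂ l₂ u₂ X₂ k₂) {M t : ℝ} (hM : 0 ≤ M) (ht : 0 ≤ t)
    (hoff : ∀ s ∈ Icc 0 t, M < k₁ s - k₂ s →
      l₁ s < ∫ ω, h₁ s (X₁ s ω) ∂μ ∧ ∫ ω, h₂ s (X₂ s ω) ∂μ < u₂ s) :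
    k₁ t - k₂ t ≤ M := by
  obtain ⟨-, hk₁, hk₁0, -, -, hmin₁, hjump₁⟩ := hsol₁
  obtain ⟨-, hk₂, hk₂0, -, -, hmin₂, hjump₂⟩ := hsol₂
  refine le_of_nonincreasing_above_level (f := fun s => k₁ s - k₂ s) ht
    (by simpa only [hk₁0, hk₂0, sub_zero] using hM) (fun s hs hlt => ?_) fun s hs hlt => ?_
  · obtain ⟨hl, hu⟩ := hoff s ⟨hs.1.le, hs.2⟩ hlt
    have hleft : M < leftLim k₁ s - leftLim k₂ s := by
      linarith [(hjump₁ s hs.1).2 hl, (hjump₂ s hs.1).1 hu]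
    exact ((hk₁.tendsto_leftLim hs.1).sub (hk₂.tendsto_leftLim hs.1)).eventually_const_lt hleft
  · have hoff' r (hsr : s < r) (hrt : r ≤ t) :=
      hoff r ⟨hs.1.trans hsr.le, hrt⟩ (hlt r ⟨hsr, hrt⟩)
    have hdecr₁ := (hmin₁ s t hs.1 hs.2).2 fun r hsr hrt => (hoff' r hsr hrt).1
    have hincr₂ := (hmin₂ s t hs.1 hs.2).1 fun r hsr hrt => (hoff' r hsr hrt).2
    linarith

theorem MeanSP.k_sub_le_of_add_lt_integral (hsol₁ : MeanSP μ h₁ Y₁ l₁ u₁ X₁ k₁)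
    (hsol₂ : MeanSP μ h₂ Y₂ l₂ u₂ X₂ k₂) {M D t : ℝ} (hM : 0 ≤ M) (ht : 0 ≤ t)
    (hD : ∀ s ∈ Icc 0 t, max |l₁ s - l₂ s| |u₁ s - u₂ s| ≤ D)
    (hgap : ∀ s ∈ Icc 0 t, M < k₁ s - k₂ s →
      ∫ ω, h₂ s (X₂ s ω) ∂μ + D < ∫ ω, h₁ s (X₁ s ω) ∂μ) :
    k₁ t - k₂ t ≤ M := by
  refine hsol₁.k_sub_le_of_lt_integral hsol₂ hM ht fun s hs hlt => ?_
  obtain ⟨-, -, -, -, hmem₁, -⟩ := hsol₁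
  obtain ⟨-, -, -, -, hmem₂, -⟩ := hsol₂
  obtain ⟨hl, hu⟩ := max_le_iff.1 (hD s hs)
  have hgap_s := hgap s hs hlt
  constructor
  · linarith [le_of_abs_le hl, (hmem₂ s hs.1).1]
  · linarith [le_of_abs_le hu, (hmem₁ s hs.1).2]

theorem MeanSP.abs_k_sub_le [IsProbabilityMeasure μ] {c A B D q t : ℝ} {L : ℝ≥0} (hc : 0 < c)
    (hh₁ : ∀ s ∈ Icc 0 q, Monotone fun x => h₁ s x - c * x)
    (hh₂ : ∀ s ∈ Icc 0 q, LipschitzWith L (h₂ s))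
    (hY₁ : ∀ s ∈ Icc 0 q, Integrable (Y₁ s) μ) (hY₂ : ∀ s ∈ Icc 0 q, Integrable (Y₂ s) μ)
    (hsol₁ : MeanSP μ h₁ Y₁ l₁ u₁ X₁ k₁) (hsol₂ : MeanSP μ h₂ Y₂ l₂ u₂ X₂ k₂)
    (hA : ∀ s ∈ Icc 0 q, ∀ x, |h₁ s x - h₂ s x| ≤ A)
    (hB : ∀ s ∈ Icc 0 q, ∫ ω, |Y₁ s ω - Y₂ s ω| ∂μ ≤ B)
    (hD : ∀ s ∈ Icc 0 q, max |l₁ s - l₂ s| |u₁ s - u₂ s| ≤ D) (ht : t ∈ Icc 0 q) :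
    |k₁ t - k₂ t| ≤ c⁻¹ * (A + L * B + D) := by
  have h0 : (0 : ℝ) ∈ Icc 0 q := left_mem_Icc.2 (ht.1.trans ht.2)
  have hA0 : 0 ≤ A := (abs_nonneg _).trans (hA 0 h0 0)
  have hB0 : 0 ≤ B := (integral_nonneg fun _ => abs_nonneg _).trans (hB 0 h0)
  have hD0 : 0 ≤ D := (le_max_of_le_left (abs_nonneg _)).trans (hD 0 h0)
  have hM : 0 ≤ c⁻¹ * (A + L * B + D) := by positivity
  have hsub : Icc 0 t ⊆ Icc 0 q := Icc_subset_Icc_right ht.2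
  have hgap s (hs : s ∈ Icc 0 q) :=
    mul_sub_le_integral_comp_add_sub hc.le (hh₁ s hs) (hh₂ s hs) (hA s hs) (hY₁ s hs) (hY₂ s hs)
      (k₁ s) (k₂ s)
  have hLB s (hs : s ∈ Icc 0 q) : L * ∫ ω, |Y₁ s ω - Y₂ s ω| ∂μ ≤ L * B := by
    gcongr; exact hB s hs
  refine abs_sub_le_iff.2 ⟨?_, ?_⟩
  · refine hsol₁.k_sub_le_of_add_lt_integral hsol₂ hM ht.1 (fun s hs => hD s (hsub hs))
      fun s hs hlt => ?_
    rw [hsol₁.integral_comp_eq hs.1, hsol₂.integral_comp_eq hs.1]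
    linarith [(hgap s (hsub hs)).1 (sub_nonneg.1 (hM.trans hlt.le)), hLB s (hsub hs),
      (inv_mul_lt_iff₀ hc).1 hlt]
  · refine hsol₂.k_sub_le_of_add_lt_integral hsol₁ hM ht.1
      (fun s hs => by simpa only [abs_sub_comm] using hD s (hsub hs)) fun s hs hlt => ?_
    rw [hsol₁.integral_comp_eq hs.1, hsol₂.integral_comp_eq hs.1]
    linarith [(hgap s (hsub hs)).2 (sub_nonneg.1 (hM.trans hlt.le)), hLB s (hsub hs),
      (inv_mul_lt_iff₀ hc).1 hlt]

theorem MeanSP.abs_sub_le_pathSupDist (hsol₁ : MeanSP μ h₁ Y₁ l₁ u₁ X₁ k₁)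
    (hsol₂ : MeanSP μ h₂ Y₂ l₂ u₂ X₂ k₂) {q t : ℝ} (ht : t ∈ Icc 0 q) (ω : Ω) :
    |Y₁ t ω - Y₂ t ω| ≤ pathSupDist Y₁ Y₂ q ω := by
  obtain ⟨hX₁, hk₁, -, hadd₁, -⟩ := hsol₁
  obtain ⟨hX₂, hk₂, -, hadd₂, -⟩ := hsol₂
  have hcadlag := ((hX₁ ω).sub hk₁).sub ((hX₂ ω).sub hk₂)
  obtain ⟨M, hM⟩ := (hcadlag.isBounded_image_Icc q).exists_norm_le
  refine le_csSup ⟨M, forall_mem_image.2 fun s hs => ?_⟩ (mem_image_of_mem _ ht)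
  simpa only [hadd₁ s hs.1, hadd₂ s hs.1, add_sub_cancel_right, Real.norm_eq_abs] using
    hM _ (mem_image_of_mem _ hs)

theorem MeanSP.pathSupDist_le_add (hsol₁ : MeanSP μ h₁ Y₁ l₁ u₁ X₁ k₁)
    (hsol₂ : MeanSP μ h₂ Y₂ l₂ u₂ X₂ k₂) {q K : ℝ} (hq : 0 ≤ q)
    (hK : ∀ t ∈ Icc 0 q, |k₁ t - k₂ t| ≤ K) (ω : Ω) :
    pathSupDist X₁ X₂ q ω ≤ pathSupDist Y₁ Y₂ q ω + K := by
  have hY_le t (ht : t ∈ Icc 0 q) := hsol₁.abs_sub_le_pathSupDist hsol₂ ht ω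
  obtain ⟨-, -, -, hadd₁, -⟩ := hsol₁
  obtain ⟨-, -, -, hadd₂, -⟩ := hsol₂
  refine csSup_le ((nonempty_Icc.2 hq).image _) (forall_mem_image.2 fun t ht => ?_)
  calc |X₁ t ω - X₂ t ω| = |(Y₁ t ω - Y₂ t ω) + (k₁ t - k₂ t)| := by
        rw [hadd₁ t ht.1, hadd₂ t ht.1, add_sub_add_comm]
    _ ≤ |Y₁ t ω - Y₂ t ω| + |k₁ t - k₂ t| := abs_add_le _ _
    _ ≤ pathSupDist Y₁ Y₂ q ω + K := add_le_add (hY_le t ht) (hK t ht)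

theorem MeanSP.lintegral_pathSupDist_le [IsProbabilityMeasure μ] {c A D q : ℝ} {L : ℝ≥0}
    (hc : 0 < c) (hh₁ : ∀ s ∈ Icc 0 q, Monotone fun x => h₁ s x - c * x)
    (hh₂ : ∀ s ∈ Icc 0 q, LipschitzWith L (h₂ s))
    (hY₁ : ∀ s ∈ Icc 0 q, Integrable (Y₁ s) μ) (hY₂ : ∀ s ∈ Icc 0 q, Integrable (Y₂ s) μ)
    (hsol₁ : MeanSP μ h₁ Y₁ l₁ u₁ X₁ k₁) (hsol₂ : MeanSP μ h₂ Y₂ l₂ u₂ X₂ k₂)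
    (hA : ∀ s ∈ Icc 0 q, ∀ x, |h₁ s x - h₂ s x| ≤ A)
    (hD : ∀ s ∈ Icc 0 q, max |l₁ s - l₂ s| |u₁ s - u₂ s| ≤ D) (hq : 0 ≤ q) :
    ∫⁻ ω, ENNReal.ofReal (pathSupDist X₁ X₂ q ω) ∂μ ≤
      ENNReal.ofReal (L * c⁻¹ + 1) * ∫⁻ ω, ENNReal.ofReal (pathSupDist Y₁ Y₂ q ω) ∂μ +
        ENNReal.ofReal (c⁻¹ * (A + D)) := by
  have h0 : (0 : ℝ) ∈ Icc 0 q := left_mem_Icc.2 hq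
  have hA0 : 0 ≤ A := (abs_nonneg _).trans (hA 0 h0 0)
  have hD0 : 0 ≤ D := (le_max_of_le_left (abs_nonneg _)).trans (hD 0 h0)
  set I := ∫⁻ ω, ENNReal.ofReal (pathSupDist Y₁ Y₂ q ω) ∂μ
  rcases eq_or_ne I ⊤ with hI | hI
  · rw [hI, ENNReal.mul_top (ENNReal.ofReal_pos.2 (by positivity)).ne', top_add]
    exact le_top
  have hB s (hs : s ∈ Icc 0 q) : ∫ ω, |Y₁ s ω - Y₂ s ω| ∂μ ≤ I.toReal :=
    integral_le_toReal_lintegral_ofReal ((hY₁ s hs).sub (hY₂ s hs)).abs.1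
      (.of_forall fun _ => abs_nonneg _) (.of_forall (hsol₁.abs_sub_le_pathSupDist hsol₂ hs)) hI
  have hk t (ht : t ∈ Icc 0 q) := hsol₁.abs_k_sub_le hc hh₁ hh₂ hY₁ hY₂ hsol₂ hA hB hD ht
  calc ∫⁻ ω, ENNReal.ofReal (pathSupDist X₁ X₂ q ω) ∂μ
      ≤ ∫⁻ ω, (ENNReal.ofReal (pathSupDist Y₁ Y₂ q ω) +
          ENNReal.ofReal (c⁻¹ * (A + L * I.toReal + D))) ∂μ :=
        lintegral_mono fun ω => (ENNReal.ofReal_le_ofReal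
          (hsol₁.pathSupDist_le_add hsol₂ hq hk ω)).trans ENNReal.ofReal_add_le
    _ = I + ENNReal.ofReal (c⁻¹ * (A + L * I.toReal + D)) := by
        rw [lintegral_add_right _ measurable_const, lintegral_const, measure_univ, mul_one]
    _ = ENNReal.ofReal (L * c⁻¹ + 1) * I + ENNReal.ofReal (c⁻¹ * (A + D)) := by
        rw [← ENNReal.ofReal_toReal hI, ENNReal.toReal_ofReal ENNReal.toReal_nonneg,
          ← ENNReal.ofReal_mul (by positivity),
          ← ENNReal.ofReal_add (by positivity) (by positivity),
          ← ENNReal.ofReal_add (by positivity) (by positivity)]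
        ring_nf

end Comparison

theorem CondH.monotone_sub_mul {h : ℝ → ℝ → ℝ} {Mh Lh ch Ch : ℝ} (hH : CondH h Mh Lh ch Ch)
    {t : ℝ} (ht : 0 ≤ t) : Monotone fun x => h t x - ch * x := by
  intro x y hxy
  have hlower := hH.lip_lower t y x ht
  rw [abs_of_nonneg (sub_nonneg.2 hxy),
    abs_of_nonneg (sub_nonneg.2 ((hH.strict_mono t ht).monotone hxy))] at hlower
  linarith

theorem CondH.lipschitzWith {h : ℝ → ℝ → ℝ} {Mh Lh ch Ch : ℝ} (hH : CondH h Mh Lh ch Ch)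
    {t : ℝ} (ht : 0 ≤ t) : LipschitzWith ⟨Ch, hH.Ch_pos.le⟩ (h t) :=
  .of_dist_le_mul fun x y => hH.lip_upper t x y ht

theorem stmt_8_general {Ω : Type*} [MeasurableSpace Ω] {μ : Measure Ω} [IsProbabilityMeasure μ]
    {h₁ h₂ : ℝ → ℝ → ℝ} {c : ℝ} {L : ℝ≥0} (hc : 0 < c)
    {q : ℝ} (hh₁ : ∀ t ∈ Icc 0 q, Monotone fun x => h₁ t x - c * x)
    (hh₂ : ∀ t ∈ Icc 0 q, LipschitzWith L (h₂ t))
    {Y₁ Y₂ : ℝ → Ω → ℝ} (hY₁ : ∀ t ∈ Icc 0 q, Integrable (Y₁ t) μ)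
    (hY₂ : ∀ t ∈ Icc 0 q, Integrable (Y₂ t) μ)
    {l₁ u₁ l₂ u₂ : ℝ → ℝ} {X₁ X₂ : ℝ → Ω → ℝ} {k₁ k₂ : ℝ → ℝ}
    (hsol₁ : MeanSP μ h₁ Y₁ l₁ u₁ X₁ k₁) (hsol₂ : MeanSP μ h₂ Y₂ l₂ u₂ X₂ k₂)
    {C : ℝ} (hcC : c⁻¹ ≤ C) (hLC : L * c⁻¹ ≤ C) (hq : 0 ≤ q) :
    (∀ A B D : ℝ,
      (∀ t x : ℝ, 0 ≤ t → t ≤ q → |h₁ t x - h₂ t x| ≤ A) →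
      (∀ t : ℝ, 0 ≤ t → t ≤ q → (∫ ω, |Y₁ t ω - Y₂ t ω| ∂μ) ≤ B) →
      (∀ t : ℝ, 0 ≤ t → t ≤ q → max |l₁ t - l₂ t| |u₁ t - u₂ t| ≤ D) →
      ∀ t : ℝ, 0 ≤ t → t ≤ q → |k₁ t - k₂ t| ≤ C * (A + B + D)) ∧
    (∀ A D : ℝ,
      (∀ t x : ℝ, 0 ≤ t → t ≤ q → |h₁ t x - h₂ t x| ≤ A) →
      (∀ t : ℝ, 0 ≤ t → t ≤ q → max |l₁ t - l₂ t| |u₁ t - u₂ t| ≤ D) →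
      (∫⁻ ω, ENNReal.ofReal (sSup ((fun t => |X₁ t ω - X₂ t ω|) '' Icc 0 q)) ∂μ) ≤
        ENNReal.ofReal (C + 1) *
            (∫⁻ ω, ENNReal.ofReal (sSup ((fun t => |Y₁ t ω - Y₂ t ω|) '' Icc 0 q)) ∂μ) +
          ENNReal.ofReal (C * (A + D))) := by
  refine ⟨fun A B D hA hB hD t ht htq => ?_, fun A D hA hD => ?_⟩
  · have hA0 : 0 ≤ A := (abs_nonneg _).trans (hA 0 0 le_rfl hq)
    have hD0 : 0 ≤ D := (le_max_of_le_left (abs_nonneg _)).trans (hD 0 le_rfl hq)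
    have hB0 : 0 ≤ B := (integral_nonneg fun _ => abs_nonneg _).trans (hB 0 le_rfl hq)
    calc |k₁ t - k₂ t| ≤ c⁻¹ * (A + L * B + D) :=
          hsol₁.abs_k_sub_le hc hh₁ hh₂ hY₁ hY₂ hsol₂ (fun s hs x => hA s x hs.1 hs.2)
            (fun s hs => hB s hs.1 hs.2) (fun s hs => hD s hs.1 hs.2) ⟨ht, htq⟩
      _ = c⁻¹ * A + L * c⁻¹ * B + c⁻¹ * D := by ring
      _ ≤ C * A + C * B + C * D := by gcongr
      _ = C * (A + B + D) := by ring
  · have hA0 : 0 ≤ A := (abs_nonneg _).trans (hA 0 0 le_rfl hq)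
    have hD0 : 0 ≤ D := (le_max_of_le_left (abs_nonneg _)).trans (hD 0 le_rfl hq)
    refine (hsol₁.lintegral_pathSupDist_le hc hh₁ hh₂ hY₁ hY₂ hsol₂
      (fun s hs x => hA s x hs.1 hs.2) (fun s hs => hD s hs.1 hs.2) hq).trans ?_
    unfold pathSupDist
    gcongr

/-- Lipschitz continuity of the solution map `(Y, h, l, u) ↦ (X, k)`. -/
theorem stmt_8 {Ω : Type*} [MeasurableSpace Ω] (μ : Measure Ω) [IsProbabilityMeasure μ]
    (h1 h2 : ℝ → ℝ → ℝ) (Mh1 Lh1 ch1 Ch1 Mh2 Lh2 ch2 Ch2 : ℝ)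
    (hH1 : CondH h1 Mh1 Lh1 ch1 Ch1) (hH2 : CondH h2 Mh2 Lh2 ch2 Ch2)
    (Y1 Y2 : ℝ → Ω → ℝ) (hY1 : NiceProcess μ Y1) (hY2 : NiceProcess μ Y2)
    (l1 u1 l2 u2 : ℝ → ℝ)
    (hl1 : CadlagOn l1) (hu1 : CadlagOn u1) (hl2 : CadlagOn l2) (hu2 : CadlagOn u2)
    (hlu1 : ∀ t : ℝ, 0 ≤ t → l1 t ≤ u1 t) (hlu2 : ∀ t : ℝ, 0 ≤ t → l2 t ≤ u2 t)
    (h01 : (∫ ω, h1 0 (Y1 0 ω) ∂μ) ∈ Set.Icc (l1 0) (u1 0))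
    (h02 : (∫ ω, h2 0 (Y2 0 ω) ∂μ) ∈ Set.Icc (l2 0) (u2 0))
    (X1 X2 : ℝ → Ω → ℝ) (k1 k2 : ℝ → ℝ)
    (hsol1 : MeanSP μ h1 Y1 l1 u1 X1 k1) (hsol2 : MeanSP μ h2 Y2 l2 u2 X2 k2)
    (C : ℝ) (hC : C = max ch1⁻¹ (2 * Ch2 * ch1⁻¹ + 1))
    (q : ℝ) (hq : 0 ≤ q) :
    (∀ A B D : ℝ,
      (∀ t x : ℝ, 0 ≤ t → t ≤ q → |h1 t x - h2 t x| ≤ A) →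
      (∀ t : ℝ, 0 ≤ t → t ≤ q → (∫ ω, |Y1 t ω - Y2 t ω| ∂μ) ≤ B) →
      (∀ t : ℝ, 0 ≤ t → t ≤ q → max |l1 t - l2 t| |u1 t - u2 t| ≤ D) →
      ∀ t : ℝ, 0 ≤ t → t ≤ q → |k1 t - k2 t| ≤ C * (A + B + D)) ∧
    (∀ A D : ℝ,
      (∀ t x : ℝ, 0 ≤ t → t ≤ q → |h1 t x - h2 t x| ≤ A) →
      (∀ t : ℝ, 0 ≤ t → t ≤ q → max |l1 t - l2 t| |u1 t - u2 t| ≤ D) →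
      (∫⁻ ω, ENNReal.ofReal (sSup ((fun t => |X1 t ω - X2 t ω|) '' Set.Icc 0 q)) ∂μ) ≤
        ENNReal.ofReal (C + 1) *
            (∫⁻ ω, ENNReal.ofReal (sSup ((fun t => |Y1 t ω - Y2 t ω|) '' Set.Icc 0 q)) ∂μ) +
          ENNReal.ofReal (C * (A + D))) := by
  have hLC : Ch2 * ch1⁻¹ ≤ C := by
    have hpos : 0 < Ch2 * ch1⁻¹ := mul_pos hH2.Ch_pos (inv_pos.2 hH1.ch_pos)
    linarith [hC ▸ le_max_right ch1⁻¹ (2 * Ch2 * ch1⁻¹ + 1)]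
  exact stmt_8_general hH1.ch_pos (fun _ ht => hH1.monotone_sub_mul ht.1)
    (fun _ ht => hH2.lipschitzWith ht.1) (fun t ht => hY1.integrable t ht.1)
    (fun t ht => hY2.integrable t ht.1) hsol1 hsol2 (hC ▸ le_max_left _ _) hLC hq
end
end

section
/- Let (X, k) be the solution of the Skorokhod problem with mean minimality condition and two constraints associated with (h, Y, l, u), and put C = max( c_h⁻¹, 2·C_h·c_h⁻¹ + 1 ). Then for all 0 ≤ t ≤ q: sup_{t≤s≤q} |k_s − k_t| ≤ C·( sup_{t≤s≤q} E|Y_s − Y_t| + L_h·(q − t) + sup_{t≤s≤q} max(|l_s − l_t|, |u_s − u_t|) ), and E[ sup_{t≤s≤q} |X_s − X_t| ] ≤ (C+1)·E[ sup_{t≤s≤q} |Y_s − Y_t| ] + C·( L_h·(q − t) + sup_{t≤s≤q} max(|l_s − l_t|, |u_s − u_t|) ). -/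
open MeasureTheory Filter Set Function Topology

noncomputable section

/-!
An increase of `k` can only happen at times when `E[h(s, X_s)]` touches the lower barrier, so
`k s - k t` is bounded by the increments `k r - k t` at contact times `r ∈ (t, s]`. At such an `r`
the mean is `l r`, while at time `t` it is at least `l t`; since `x ↦ h(r, x)` grows at rate at
least `ch`, the increment `ch * (k r - k t)` is controlled by the increment of `l` plus the change
of the mean caused by time and by `Y`. Decreases of `k` are handled in the same way at the contact
times with `u`. This gives `ch⁻¹ * (Ch * sup E|Y - Y_t| + Lh * (q - t) + sup |barrier increments|)`
as a bound for `|k s - k t|`, and the bound for `X = Y + k` follows pathwise.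
-/

/-! ### Càdlàg functions -/

namespace CadlagOn

variable {E : Type*}

theorem isBounded_image_Icc_s9 [PseudoMetricSpace E] {f : ℝ → E} (hf : CadlagOn f) {t q : ℝ}
    (ht : 0 ≤ t) : Bornology.IsBounded (f '' Icc t q) := by
  refine isCompact_Icc.induction_on (p := fun S => Bornology.IsBounded (f '' S)) (by simp)
    (fun _ _ hST hT => hT.subset (image_mono hST))
    (fun _ _ hS hT => by simpa only [image_union] using hS.union hT) fun x hx => ?_
  obtain ⟨U, hU, hfU⟩ := Metric.exists_isBounded_image_of_tendsto (hf.1 x (ht.trans hx.1))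
  rcases hx.1.eq_or_lt with rfl | htx
  · exact ⟨U, nhdsWithin_mono _ Icc_subset_Ici_self hU, hfU⟩
  · obtain ⟨L, hL⟩ := hf.2 x (ht.trans_lt htx)
    obtain ⟨V, hV, hfV⟩ := Metric.exists_isBounded_image_of_tendsto hL
    refine ⟨V ∪ U, mem_nhdsWithin_of_mem_nhds ?_, by simpa only [image_union] using hfV.union hfU⟩
    rw [← nhdsLT_sup_nhdsGE]
    exact union_mem_sup hV hU

theorem bddAbove_image_dist [PseudoMetricSpace E] {f : ℝ → E} (hf : CadlagOn f) {t q : ℝ}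
    (ht : 0 ≤ t) (a : E) : BddAbove ((fun s => dist (f s) a) '' Icc t q) := by
  obtain ⟨R, hR⟩ := (hf.isBounded_image_Icc_s9 ht).subset_closedBall a
  exact ⟨R, forall_mem_image.2 fun s hs => hR (mem_image_of_mem f hs)⟩

theorem tendsto_leftLim_s9 [TopologicalSpace E] [T2Space E] {f : ℝ → E} (hf : CadlagOn f) {t : ℝ}
    (ht : 0 < t) : Tendsto f (𝓝[<] t) (𝓝 (leftLim f t)) := by
  obtain ⟨L, hL⟩ := hf.2 t ht
  rwa [leftLim_eq_of_tendsto hL]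

theorem neg [TopologicalSpace E] [Neg E] [ContinuousNeg E] {f : ℝ → E} (hf : CadlagOn f) :
    CadlagOn (-f) :=
  ⟨fun t ht => (hf.1 t ht).neg, fun t ht => (hf.2 t ht).imp' Neg.neg fun _ hL => hL.neg⟩

theorem prodMk {F : Type*} [TopologicalSpace E] [TopologicalSpace F] {f : ℝ → E} {g : ℝ → F}
    (hf : CadlagOn f) (hg : CadlagOn g) : CadlagOn fun t => (f t, g t) := by
  refine ⟨fun t ht => (hf.1 t ht).prodMk (hg.1 t ht), fun t ht => ?_⟩
  obtain ⟨⟨a, ha⟩, b, hb⟩ := And.intro (hf.2 t ht) (hg.2 t ht)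
  exact ⟨(a, b), ha.prodMk_nhds hb⟩

theorem leftLim_neg [TopologicalSpace E] [T2Space E] [Neg E] [ContinuousNeg E] {f : ℝ → E}
    (hf : CadlagOn f) {t : ℝ} (ht : 0 < t) : leftLim (-f) t = -leftLim f t :=
  leftLim_eq_of_tendsto (hf.tendsto_leftLim_s9 ht).neg

end CadlagOn

/-! ### Functions increasing only on a contact set -/

/-- The function `k` increases only at the times in the contact set `A`. This is one half of the
minimality condition of a Skorokhod problem, `A` being the set of times at which the constrained
quantity touches its lower barrier; the other half says the same of `-k` and the upper barrier. -/
structure IncreasesOnlyOn (A : Set ℝ) (k : ℝ → ℝ) : Prop where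
  le_of_disjoint : ∀ ⦃a b : ℝ⦄, 0 ≤ a → a ≤ b → Disjoint (Ioc a b) A → k b ≤ k a
  le_leftLim : ∀ ⦃r : ℝ⦄, 0 < r → r ∉ A → k r ≤ leftLim k r

theorem IncreasesOnlyOn.le_of_forall_mem_le {A : Set ℝ} {k : ℝ → ℝ} (hA : IncreasesOnlyOn A k)
    (hk : CadlagOn k) {t s M : ℝ} (ht : 0 ≤ t) (hts : t ≤ s) (hktM : k t ≤ M)
    (hM : ∀ r ∈ A ∩ Ioc t s, k r ≤ M) : k s ≤ M := by
  rcases (A ∩ Ioc t s).eq_empty_or_nonempty with hempty | hne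
  · have hdisj : Disjoint (Ioc t s) A := (disjoint_iff_inter_eq_empty.2 hempty).symm
    exact (hA.le_of_disjoint ht hts hdisj).trans hktM
  · set σ := sSup (A ∩ Ioc t s)
    have hσ : IsLUB (A ∩ Ioc t s) σ := isLUB_csSup hne ⟨s, fun r hr => hr.2.2⟩
    have htσ : t < σ := let ⟨r, hr⟩ := hne; hr.2.1.trans_le (hσ.1 hr)
    have hσs : σ ≤ s := hσ.2 fun r hr => hr.2.2
    have hdisj : Disjoint (Ioc σ s) A := Set.disjoint_left.2 fun r hr hrA =>
      hr.1.not_ge (hσ.1 ⟨hrA, htσ.trans hr.1, hr.2⟩)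
    refine (hA.le_of_disjoint (ht.trans htσ.le) hσs hdisj).trans ?_
    by_cases hσA : σ ∈ A
    · exact hM σ ⟨hσA, htσ, hσs⟩
    · have hσ0 : 0 < σ := ht.trans_lt htσ
      have hfreq : ∃ᶠ r in 𝓝[<] σ, k r ≤ M := by
        refine frequently_nhdsWithin_iff.2 <|
          (frequently_nhdsWithin_iff.1 (hσ.frequently_mem hne)).mono fun r hr => ?_
        exact ⟨hM r hr.1, (mem_Iic.1 hr.2).lt_of_ne (ne_of_mem_of_not_mem hr.1.1 hσA)⟩
      exact (hA.le_leftLim hσ0 hσA).trans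
        (le_of_tendsto_of_frequently (hk.tendsto_leftLim_s9 hσ0) hfreq)

/-! ### Suprema of oscillations -/

theorem sSup_abs_sub_le_sSup_abs_sub_add {ι : Type*} {S : Set ι} {x y k : ι → ℝ} {t : ι} {R : ℝ}
    (ht : t ∈ S) (hx : ∀ s ∈ S, x s = y s + k s) (hk : ∀ s ∈ S, |k s - k t| ≤ R)
    (hy : BddAbove ((fun s => |y s - y t|) '' S)) :
    sSup ((fun s => |x s - x t|) '' S) ≤ sSup ((fun s => |y s - y t|) '' S) + R := by
  refine csSup_le ⟨_, mem_image_of_mem _ ht⟩ (forall_mem_image.2 fun s hs => ?_)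
  calc |x s - x t| = |(y s - y t) + (k s - k t)| := by rw [hx s hs, hx t ht]; ring_nf
    _ ≤ |y s - y t| + |k s - k t| := abs_add_le _ _
    _ ≤ _ := add_le_add (le_csSup hy (mem_image_of_mem _ hs)) (hk s hs)

theorem lintegral_ofReal_sSup_abs_sub_le_add {Ω ι : Type*} [MeasurableSpace Ω] {μ : Measure Ω}
    [IsProbabilityMeasure μ] {S : Set ι} {X Y : ι → Ω → ℝ} {k : ι → ℝ} {t : ι} {R : ℝ}
    (ht : t ∈ S) (hX : ∀ s ∈ S, ∀ ω, X s ω = Y s ω + k s) (hk : ∀ s ∈ S, |k s - k t| ≤ R)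
    (hY : ∀ ω, BddAbove ((fun s => |Y s ω - Y t ω|) '' S)) :
    ∫⁻ ω, ENNReal.ofReal (sSup ((fun s => |X s ω - X t ω|) '' S)) ∂μ ≤
      ∫⁻ ω, ENNReal.ofReal (sSup ((fun s => |Y s ω - Y t ω|) '' S)) ∂μ + ENNReal.ofReal R := by
  calc ∫⁻ ω, ENNReal.ofReal (sSup ((fun s => |X s ω - X t ω|) '' S)) ∂μ
      ≤ ∫⁻ ω, (ENNReal.ofReal (sSup ((fun s => |Y s ω - Y t ω|) '' S)) + ENNReal.ofReal R) ∂μ :=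
        lintegral_mono fun ω => (ENNReal.ofReal_le_ofReal <|
          sSup_abs_sub_le_sSup_abs_sub_add ht (fun s hs => hX s hs ω) hk (hY ω)).trans
          ENNReal.ofReal_add_le
    _ = _ := by simp [lintegral_add_right _ measurable_const]

theorem ofReal_sSup_integral_le_lintegral_sSup {Ω ι : Type*} [MeasurableSpace Ω] {μ : Measure Ω}
    {S : Set ι} {Z : ι → Ω → ℝ} (hZ : ∀ s ∈ S, Integrable (Z s) μ) (hZ0 : ∀ s ∈ S, 0 ≤ Z s)
    (hbdd : ∀ ω, BddAbove ((fun s => Z s ω) '' S)) :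
    ENNReal.ofReal (sSup ((fun s => ∫ ω, Z s ω ∂μ) '' S)) ≤
      ∫⁻ ω, ENNReal.ofReal (sSup ((fun s => Z s ω) '' S)) ∂μ := by
  set I := ∫⁻ ω, ENNReal.ofReal (sSup ((fun s => Z s ω) '' S)) ∂μ
  rcases eq_or_ne I ⊤ with hI | hI
  · exact hI ▸ le_top
  · refine (ENNReal.ofReal_le_iff_le_toReal hI).2 <|
      Real.sSup_le (forall_mem_image.2 fun s hs => ?_) ENNReal.toReal_nonneg
    rw [← ENNReal.ofReal_le_iff_le_toReal hI,
      ofReal_integral_eq_lintegral_ofReal (hZ s hs) (.of_forall (hZ0 s hs))]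
    exact lintegral_mono fun ω =>
      ENNReal.ofReal_le_ofReal (le_csSup (hbdd ω) (mem_image_of_mem _ hs))

theorem inv_mul_add_le_max_mul_add {b c D E : ℝ} (hb : 0 ≤ b) (hc : 0 ≤ c) (hD : 0 ≤ D)
    (hE : 0 ≤ E) :
    c⁻¹ * (b * D + E) ≤ max c⁻¹ (2 * b * c⁻¹ + 1) * (D + E) := by
  have hbc : b * c⁻¹ ≤ max c⁻¹ (2 * b * c⁻¹ + 1) :=
    le_max_of_le_right (by linarith [mul_nonneg hb (inv_nonneg.2 hc)])
  calc c⁻¹ * (b * D + E) = b * c⁻¹ * D + c⁻¹ * E := by ring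
    _ ≤ max c⁻¹ (2 * b * c⁻¹ + 1) * D + max c⁻¹ (2 * b * c⁻¹ + 1) * E := by
      gcongr
      exact le_max_left _ _
    _ = max c⁻¹ (2 * b * c⁻¹ + 1) * (D + E) := (mul_add _ _ _).symm

theorem add_ofReal_mul_add_le {C D E : ℝ} {I : ENNReal} (hC : 0 ≤ C)
    (hD : ENNReal.ofReal D ≤ I) :
    I + ENNReal.ofReal (C * (D + E)) ≤
      ENNReal.ofReal (C + 1) * I + ENNReal.ofReal (C * E) := by
  calc I + ENNReal.ofReal (C * (D + E))
      ≤ I + (ENNReal.ofReal C * ENNReal.ofReal D + ENNReal.ofReal (C * E)) := by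
        rw [mul_add, ← ENNReal.ofReal_mul hC]
        gcongr
        exact ENNReal.ofReal_add_le
    _ ≤ I + (ENNReal.ofReal C * I + ENNReal.ofReal (C * E)) := by gcongr
    _ = ENNReal.ofReal (C + 1) * I + ENNReal.ofReal (C * E) := by
      rw [ENNReal.ofReal_add hC zero_le_one, ENNReal.ofReal_one]
      ring

/-! ### Means of `h` -/

section Mean

variable {Ω : Type*} [MeasurableSpace Ω] {μ : Measure Ω} {h : ℝ → ℝ → ℝ} {Mh Lh ch Ch : ℝ}

namespace CondH

theorem integrable_comp [IsFiniteMeasure μ] (hH : CondH h Mh Lh ch Ch) {t : ℝ} (ht : 0 ≤ t)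
    {Z : Ω → ℝ} (hZ : Integrable Z μ) : Integrable (fun ω => h t (Z ω)) μ := by
  have hmeas : Measurable (h t) := hH.meas.comp measurable_prodMk_left
  exact (((integrable_const 1).add hZ.abs).const_mul Mh).mono'
    (hmeas.comp_aemeasurable hZ.aemeasurable).aestronglyMeasurable
    (.of_forall fun ω => hH.growth t (Z ω) ht)

theorem mul_sub_le (hH : CondH h Mh Lh ch Ch) {t x y : ℝ} (ht : 0 ≤ t) (hxy : x ≤ y) :
    ch * (y - x) ≤ h t y - h t x := by
  have hmono : h t x ≤ h t y := (hH.strict_mono t ht).monotone hxy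
  simpa only [abs_of_nonneg (sub_nonneg.2 hxy), abs_of_nonneg (sub_nonneg.2 hmono)]
    using hH.lip_lower t y x ht

theorem abs_sub_le (hH : CondH h Mh Lh ch Ch) {s t : ℝ} (hs : 0 ≤ s) (ht : 0 ≤ t) (x y : ℝ) :
    |h s x - h t y| ≤ Lh * |s - t| + Ch * |x - y| :=
  (_root_.abs_sub_le _ (h t x) _).trans
    (add_le_add (hH.lip_time t s x ht hs) (hH.lip_upper t x y ht))

theorem mul_sub_le_integral_sub [IsProbabilityMeasure μ] (hH : CondH h Mh Lh ch Ch) {s t a b : ℝ}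
    (hs : 0 ≤ s) (ht : 0 ≤ t) (hab : a ≤ b) {Z W : Ω → ℝ} (hZ : Integrable Z μ)
    (hW : Integrable W μ) :
    ch * (b - a) ≤ (∫ ω, h s (Z ω + b) ∂μ) - (∫ ω, h t (W ω + a) ∂μ) +
      (Lh * |s - t| + Ch * ∫ ω, |Z ω - W ω| ∂μ) := by
  have hhZ : Integrable (fun ω => h s (Z ω + b)) μ :=
    hH.integrable_comp hs (hZ.add (integrable_const b))
  have hhW : Integrable (fun ω => h t (W ω + a)) μ :=
    hH.integrable_comp ht (hW.add (integrable_const a))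
  have hdiff : Integrable (fun ω => h s (Z ω + b) - h t (W ω + a)) μ := hhZ.sub hhW
  have hdist : Integrable (fun ω => Ch * |Z ω - W ω|) μ := (hZ.sub hW).abs.const_mul Ch
  have herror : Integrable (fun ω => Lh * |s - t| + Ch * |Z ω - W ω|) μ :=
    (integrable_const _).add hdist
  have hpointwise (ω : Ω) : ch * (b - a) ≤
      h s (Z ω + b) - h t (W ω + a) + (Lh * |s - t| + Ch * |Z ω - W ω|) := by
    have hmono := hH.mul_sub_le hs (add_le_add_right hab (Z ω))
    have hlip := (abs_le.1 (hH.abs_sub_le hs ht (Z ω + a) (W ω + a))).1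
    rw [add_sub_add_left_eq_sub] at hmono
    rw [add_sub_add_right_eq_sub] at hlip
    linarith
  calc ch * (b - a) = ∫ _, ch * (b - a) ∂μ := by simp
    _ ≤ ∫ ω, (h s (Z ω + b) - h t (W ω + a) + (Lh * |s - t| + Ch * |Z ω - W ω|)) ∂μ :=
      integral_mono (integrable_const _) (hdiff.add herror) hpointwise
    _ = _ := by
      rw [integral_add hdiff herror, integral_sub hhZ hhW, integral_add (integrable_const _) hdist]
      simp [integral_const_mul]

end CondH

theorem NiceProcess.bddAbove_image_integral_abs_sub {Y : ℝ → Ω → ℝ} (hY : NiceProcess μ Y)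
    {t : ℝ} (ht : 0 ≤ t) (q : ℝ) :
    BddAbove ((fun s => ∫ ω, |Y s ω - Y t ω| ∂μ) '' Icc t q) := by
  rcases lt_or_ge q t with hqt | htq
  · simp [Icc_eq_empty_of_lt hqt]
  obtain ⟨K, hK⟩ := (hY.unifInt q (ht.trans htq)).2.2
  have hbound (s : ℝ) (hs : s ∈ Icc t q) : ∫ ω, |Y s ω| ∂μ ≤ K := by
    have hnorm : eLpNorm (Y s) 1 μ ≤ K := hK ⟨s, ht.trans hs.1, hs.2⟩
    rw [eLpNorm_one_eq_lintegral_enorm] at hnorm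
    calc ∫ ω, |Y s ω| ∂μ = (∫⁻ ω, ‖Y s ω‖ₑ ∂μ).toReal :=
          integral_norm_eq_lintegral_enorm (hY.integrable s (ht.trans hs.1)).1
      _ ≤ K := ENNReal.toReal_mono ENNReal.coe_ne_top hnorm
  refine ⟨K + K, forall_mem_image.2 fun s hs => ?_⟩
  have hYs := hY.integrable s (ht.trans hs.1)
  have hYt := hY.integrable t ht
  calc ∫ ω, |Y s ω - Y t ω| ∂μ ≤ ∫ ω, (|Y s ω| + |Y t ω|) ∂μ :=
        integral_mono (hYs.sub hYt).abs (hYs.abs.add hYt.abs) fun ω => abs_sub _ _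
    _ = (∫ ω, |Y s ω| ∂μ) + ∫ ω, |Y t ω| ∂μ := integral_add hYs.abs hYt.abs
    _ ≤ K + K := add_le_add (hbound s hs) (hbound t ⟨le_rfl, htq⟩)

/-! ### The compensator `k` -/

namespace MeanSP

variable {Y X : ℝ → Ω → ℝ} {l u k : ℝ → ℝ}

theorem cadlagOn_compensator (hsol : MeanSP μ h Y l u X k) : CadlagOn k := hsol.2.1

theorem eq_add (hsol : MeanSP μ h Y l u X k) {t : ℝ} (ht : 0 ≤ t) (ω : Ω) :
    X t ω = Y t ω + k t :=
  hsol.2.2.2.1 t ht ω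

theorem integral_mem_Icc (hsol : MeanSP μ h Y l u X k) {t : ℝ} (ht : 0 ≤ t) :
    ∫ ω, h t (X t ω) ∂μ ∈ Icc (l t) (u t) :=
  hsol.2.2.2.2.1 t ht

theorem increasesOnlyOn (hsol : MeanSP μ h Y l u X k) :
    IncreasesOnlyOn {s | ∫ ω, h s (X s ω) ∂μ ≤ l s} k := by
  obtain ⟨-, -, -, -, -, hmin, hjump⟩ := hsol
  refine ⟨fun a b ha hab hdisj => ?_, fun r hr hrA => ?_⟩
  · exact sub_nonpos.1 <| (hmin a b ha hab).2 fun s has hsb =>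
      not_le.1 (Set.disjoint_left.1 hdisj ⟨has, hsb⟩)
  · exact sub_nonpos.1 <| (hjump r hr).2 (not_le.1 hrA)

theorem increasesOnlyOn_neg (hsol : MeanSP μ h Y l u X k) :
    IncreasesOnlyOn {s | u s ≤ ∫ ω, h s (X s ω) ∂μ} (-k) := by
  have hk := hsol.cadlagOn_compensator
  obtain ⟨-, -, -, -, -, hmin, hjump⟩ := hsol
  refine ⟨fun a b ha hab hdisj => ?_, fun r hr hrA => ?_⟩
  · exact neg_le_neg <| sub_nonneg.1 <| (hmin a b ha hab).1 fun s has hsb =>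
      not_le.1 (Set.disjoint_left.1 hdisj ⟨has, hsb⟩)
  · rw [hk.leftLim_neg hr]
    exact neg_le_neg <| sub_nonneg.1 <| (hjump r hr).1 (not_le.1 hrA)

variable [IsProbabilityMeasure μ]

theorem mul_sub_le (hsol : MeanSP μ h Y l u X k) (hH : CondH h Mh Lh ch Ch)
    (hY : ∀ t, 0 ≤ t → Integrable (Y t) μ) {s t : ℝ} (hs : 0 ≤ s) (ht : 0 ≤ t)
    (hk : k t ≤ k s) :
    ch * (k s - k t) ≤ (∫ ω, h s (X s ω) ∂μ) - (∫ ω, h t (X t ω) ∂μ) +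
      (Lh * |s - t| + Ch * ∫ ω, |Y s ω - Y t ω| ∂μ) := by
  simp_rw [hsol.eq_add hs, hsol.eq_add ht]
  exact hH.mul_sub_le_integral_sub hs ht hk (hY s hs) (hY t ht)

theorem le_add_of_lower (hsol : MeanSP μ h Y l u X k) (hH : CondH h Mh Lh ch Ch)
    (hY : ∀ t, 0 ≤ t → Integrable (Y t) μ) {s t R : ℝ} (ht : 0 ≤ t) (hts : t ≤ s)
    (hR : ∀ r ∈ Icc t s,
      |l r - l t| + (Lh * |r - t| + Ch * ∫ ω, |Y r ω - Y t ω| ∂μ) ≤ ch * R) :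
    k s ≤ k t + R := by
  have hR0 : 0 ≤ R :=
    (mul_nonneg_iff_of_pos_left hH.ch_pos).1 (by simpa using hR t (left_mem_Icc.2 hts))
  refine hsol.increasesOnlyOn.le_of_forall_mem_le hsol.cadlagOn_compensator ht hts
    (le_add_of_nonneg_right hR0) fun r ⟨(hrl : ∫ ω, h r (X r ω) ∂μ ≤ l r), htr, hrs⟩ => ?_
  rcases le_total (k r) (k t) with hle | hle
  · exact hle.trans (le_add_of_nonneg_right hR0)
  · have hlt : l t ≤ ∫ ω, h t (X t ω) ∂μ := (hsol.integral_mem_Icc ht).1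
    have hmean := hsol.mul_sub_le hH hY (ht.trans htr.le) ht hle
    refine sub_le_iff_le_add'.1 <| le_of_mul_le_mul_left ?_ hH.ch_pos
    linarith [hR r ⟨htr.le, hrs⟩, le_abs_self (l r - l t)]

theorem le_add_of_upper (hsol : MeanSP μ h Y l u X k) (hH : CondH h Mh Lh ch Ch)
    (hY : ∀ t, 0 ≤ t → Integrable (Y t) μ) {s t R : ℝ} (ht : 0 ≤ t) (hts : t ≤ s)
    (hR : ∀ r ∈ Icc t s,
      |u r - u t| + (Lh * |r - t| + Ch * ∫ ω, |Y r ω - Y t ω| ∂μ) ≤ ch * R) :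
    k t ≤ k s + R := by
  have hR0 : 0 ≤ R :=
    (mul_nonneg_iff_of_pos_left hH.ch_pos).1 (by simpa using hR t (left_mem_Icc.2 hts))
  suffices hneg : (-k) s ≤ (-k) t + R by simp only [Pi.neg_apply] at hneg; linarith
  refine hsol.increasesOnlyOn_neg.le_of_forall_mem_le hsol.cadlagOn_compensator.neg ht hts
    (le_add_of_nonneg_right hR0) fun r ⟨(hru : u r ≤ ∫ ω, h r (X r ω) ∂μ), htr, hrs⟩ => ?_
  rcases le_total (k t) (k r) with hle | hle
  · exact (neg_le_neg hle).trans (le_add_of_nonneg_right hR0)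
  · have hut : ∫ ω, h t (X t ω) ∂μ ≤ u t := (hsol.integral_mem_Icc ht).2
    have hmean := hsol.mul_sub_le hH hY ht (ht.trans htr.le) hle
    simp_rw [abs_sub_comm t r, abs_sub_comm (Y t _)] at hmean
    have hkR : k t - k r ≤ R := by
      refine le_of_mul_le_mul_left ?_ hH.ch_pos
      linarith [hR r ⟨htr.le, hrs⟩, neg_abs_le (u r - u t)]
    simp only [Pi.neg_apply]
    linarith

theorem abs_sub_le (hsol : MeanSP μ h Y l u X k) (hH : CondH h Mh Lh ch Ch)
    (hY : ∀ t, 0 ≤ t → Integrable (Y t) μ) {s t q B D : ℝ} (ht : 0 ≤ t) (hs : s ∈ Icc t q)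
    (hD : ∀ r ∈ Icc t q, ∫ ω, |Y r ω - Y t ω| ∂μ ≤ D)
    (hB : ∀ r ∈ Icc t q, max |l r - l t| |u r - u t| ≤ B) :
    |k s - k t| ≤ ch⁻¹ * (Ch * D + (Lh * (q - t) + B)) := by
  have hdrift {r : ℝ} (hr : r ∈ Icc t q) :
      B + (Lh * |r - t| + Ch * ∫ ω, |Y r ω - Y t ω| ∂μ) ≤
        ch * (ch⁻¹ * (Ch * D + (Lh * (q - t) + B))) := by
    have htime : Lh * |r - t| ≤ Lh * (q - t) := by
      rw [abs_of_nonneg (sub_nonneg.2 hr.1)]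
      exact mul_le_mul_of_nonneg_left (sub_le_sub_right hr.2 t) hH.Lh_pos.le
    rw [mul_inv_cancel_left₀ hH.ch_pos.ne']
    linarith [mul_le_mul_of_nonneg_left (hD r hr) hH.Ch_pos.le]
  have hsub : Icc t s ⊆ Icc t q := Icc_subset_Icc_right hs.2
  have hupper := hsol.le_add_of_lower hH hY ht hs.1 fun r hr =>
    (add_le_add_left ((le_max_left _ _).trans (hB r (hsub hr))) _).trans (hdrift (hsub hr))
  have hlower := hsol.le_add_of_upper hH hY ht hs.1 fun r hr =>
    (add_le_add_left ((le_max_right _ _).trans (hB r (hsub hr))) _).trans (hdrift (hsub hr))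
  exact abs_sub_le_iff.2 ⟨sub_le_iff_le_add'.2 hupper, sub_le_iff_le_add'.2 hlower⟩

theorem abs_sub_le_max_mul (hsol : MeanSP μ h Y l u X k) (hH : CondH h Mh Lh ch Ch)
    (hY : NiceProcess μ Y) (hl : CadlagOn l) (hu : CadlagOn u) {t q : ℝ} (ht : 0 ≤ t) :
    ∀ s ∈ Icc t q, |k s - k t| ≤ max ch⁻¹ (2 * Ch * ch⁻¹ + 1) *
      (sSup ((fun s => ∫ ω, |Y s ω - Y t ω| ∂μ) '' Icc t q) +
        (Lh * (q - t) + sSup ((fun s => max |l s - l t| |u s - u t|) '' Icc t q))) := by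
  intro s hs
  have hbddD := hY.bddAbove_image_integral_abs_sub ht q
  have hbddB : BddAbove ((fun s => max |l s - l t| |u s - u t|) '' Icc t q) :=
    (hl.prodMk hu).bddAbove_image_dist ht (l t, u t)
  set D := sSup ((fun s => ∫ ω, |Y s ω - Y t ω| ∂μ) '' Icc t q)
  set B := sSup ((fun s => max |l s - l t| |u s - u t|) '' Icc t q)
  have hD0 : 0 ≤ D :=
    Real.sSup_nonneg (forall_mem_image.2 fun s _ => integral_nonneg fun ω => abs_nonneg _)
  have hB0 : 0 ≤ B :=
    Real.sSup_nonneg (forall_mem_image.2 fun s _ => le_max_of_le_left (abs_nonneg _))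
  have htime : 0 ≤ Lh * (q - t) := mul_nonneg hH.Lh_pos.le (sub_nonneg.2 (hs.1.trans hs.2))
  calc |k s - k t| ≤ ch⁻¹ * (Ch * D + (Lh * (q - t) + B)) :=
        hsol.abs_sub_le hH hY.integrable ht hs
          (fun r hr => le_csSup hbddD (mem_image_of_mem _ hr))
          (fun r hr => le_csSup hbddB (mem_image_of_mem _ hr))
    _ ≤ _ := inv_mul_add_le_max_mul_add hH.Ch_pos.le hH.ch_pos.le hD0 (add_nonneg htime hB0)

end MeanSP

end Mean

/-- modulus-of-oscillation estimates for `k` and `X` on `[t, q]`. -/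
theorem stmt_9 {Ω : Type*} [MeasurableSpace Ω] (μ : Measure Ω) [IsProbabilityMeasure μ]
    (h : ℝ → ℝ → ℝ) (Mh Lh ch Ch : ℝ) (hH : CondH h Mh Lh ch Ch)
    (Y : ℝ → Ω → ℝ) (hY : NiceProcess μ Y)
    (l u : ℝ → ℝ) (hl : CadlagOn l) (hu : CadlagOn u)
    (hlu : ∀ t : ℝ, 0 ≤ t → l t ≤ u t)
    (h0 : (∫ ω, h 0 (Y 0 ω) ∂μ) ∈ Set.Icc (l 0) (u 0))
    (X : ℝ → Ω → ℝ) (k : ℝ → ℝ) (hsol : MeanSP μ h Y l u X k)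
    (C : ℝ) (hC : C = max ch⁻¹ (2 * Ch * ch⁻¹ + 1))
    (t q : ℝ) (ht : 0 ≤ t) (htq : t ≤ q) :
    sSup ((fun s => |k s - k t|) '' Set.Icc t q) ≤
      C * (sSup ((fun s => ∫ ω, |Y s ω - Y t ω| ∂μ) '' Set.Icc t q) + Lh * (q - t) +
        sSup ((fun s => max |l s - l t| |u s - u t|) '' Set.Icc t q)) ∧
    (∫⁻ ω, ENNReal.ofReal (sSup ((fun s => |X s ω - X t ω|) '' Set.Icc t q)) ∂μ) ≤
      ENNReal.ofReal (C + 1) *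
          (∫⁻ ω, ENNReal.ofReal (sSup ((fun s => |Y s ω - Y t ω|) '' Set.Icc t q)) ∂μ) +
        ENNReal.ofReal (C * (Lh * (q - t) +
          sSup ((fun s => max |l s - l t| |u s - u t|) '' Set.Icc t q))) := by
  subst hC
  have hkbound := hsol.abs_sub_le_max_mul hH hY hl hu (t := t) (q := q) ht
  have hbddY (ω : Ω) : BddAbove ((fun s => |Y s ω - Y t ω|) '' Icc t q) :=
    (hY.cadlag ω).bddAbove_image_dist ht (Y t ω)
  constructor
  · rw [add_assoc]
    exact csSup_le ((nonempty_Icc.2 htq).image _) (forall_mem_image.2 hkbound)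
  · have hmean := ofReal_sSup_integral_le_lintegral_sSup (μ := μ)
      (fun s (hs : s ∈ Icc t q) =>
        ((hY.integrable s (ht.trans hs.1)).sub (hY.integrable t ht)).abs)
      (fun s _ ω => abs_nonneg _) hbddY
    exact (lintegral_ofReal_sSup_abs_sub_le_add (left_mem_Icc.2 htq)
      (fun s hs => hsol.eq_add (ht.trans hs.1)) hkbound hbddY).trans
      (add_ofReal_mul_add_le (le_max_of_le_left (inv_nonneg.2 hH.ch_pos.le)) hmean)
end
end
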